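/- arXiv:0904.2547 — 2 statements merged into one kernel-verified Lean document; each statement's English description precedes it below -/
import Mathlib

section
/- Let γ > 0 and let u₀ : ℝ → ℝ be a twice continuously differentiable 1-periodic function with ∫₀¹ u₀(x) dx = 0. If ∫₀¹ (u₀'(x))³ dx < 0 and ‖u₀‖_{L²} > 3γ/4, then wave breaking occurs in finite time: every periodic classical solution u of the Ostrovsky–Hunter equation on [0,T) with u(0,·) = u₀ and with u_x bounded from below on [0,T) × ℝ has T < ∞. -/
open MeasureTheory Filter Set intervalIntegral

/-- A periodic (period `1` in `x`) classical solution of the Ostrovsky–Hunter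
equation `(u_t + u u_x)_x = γ u` on the set `S` of times (typically `[0,T)`):
`u` is `1`-periodic in `x`, continuously differentiable in `t`, twice
continuously differentiable in `x`, with `u_tx` continuous, and the expanded
equation `u_tx + u_x² + u u_xx = γ u` holds pointwise at positive times of `S`. -/
structure IsPeriodicOHSolution (γ : ℝ) (S : Set ℝ) (u : ℝ → ℝ → ℝ) : Prop where
  periodic : ∀ t ∈ S, ∀ x : ℝ, u t (x + 1) = u t x
  diff_t : ∀ t ∈ S, ∀ x : ℝ, DifferentiableAt ℝ (fun s => u s x) t
  diff_x : ∀ t ∈ S, ∀ x : ℝ, DifferentiableAt ℝ (u t) x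
  diff_xx : ∀ t ∈ S, ∀ x : ℝ, DifferentiableAt ℝ (deriv (u t)) x
  diff_tx : ∀ t ∈ S, ∀ x : ℝ, DifferentiableAt ℝ (fun y => deriv (fun s => u s y) t) x
  cont_u : ContinuousOn (fun p : ℝ × ℝ => u p.1 p.2) (S ×ˢ (Set.univ : Set ℝ))
  cont_ut : ContinuousOn (fun p : ℝ × ℝ => deriv (fun s => u s p.2) p.1)
      (S ×ˢ (Set.univ : Set ℝ))
  cont_ux : ContinuousOn (fun p : ℝ × ℝ => deriv (u p.1) p.2) (S ×ˢ (Set.univ : Set ℝ))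
  cont_uxx : ContinuousOn (fun p : ℝ × ℝ => deriv (deriv (u p.1)) p.2)
      (S ×ˢ (Set.univ : Set ℝ))
  cont_utx : ContinuousOn (fun p : ℝ × ℝ => deriv (fun y => deriv (fun s => u s y) p.1) p.2)
      (S ×ˢ (Set.univ : Set ℝ))
  eqn : ∀ t ∈ S, 0 < t → ∀ x : ℝ,
    deriv (fun y => deriv (fun s => u s y) t) x
      + (deriv (u t) x) ^ 2 + u t x * deriv (deriv (u t)) x = γ * u t x

/-!
Write `D = u_t + u u_x`, so that the equation reads `D_x = γ u`. Integrating over a period gives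
`∫ u = 0`, and `2 u u_t = (D² / γ - 2 u³ / 3)_x` shows that `E = ∫ u²` is conserved. The functional
`V = ∫ u_x³` satisfies `V' = 3γ ∫ u u_x² - 2 ∫ u_x⁴`. Here Young's inequality bounds the first term
by `9/4 γ² E + ∫ u_x⁴`, while the Cauchy–Schwarz and Poincaré inequalities give
`∫ u_x⁴ ≥ (∫ u_x²)² ≥ 16 E²`. Hence `V' ≤ 9/4 γ² E - 16 E²`, which is a negative constant as soon as
`√E > 3|γ|/8`, whereas a lower bound `c` for `u_x` forces `V ≥ c³`: the lifespan is finite.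
-/

open Topology Function

section Calculus

variable {E : Type*} [NormedAddCommGroup E] [NormedSpace ℝ E]

lemma continuous_of_continuousOn_uncurry {X Y Z : Type*} [TopologicalSpace X] [TopologicalSpace Y]
    [TopologicalSpace Z] {F : X → Y → Z} {S : Set X} {s : X}
    (hF : ContinuousOn (uncurry F) (S ×ˢ univ)) (hs : s ∈ S) : Continuous (F s) :=
  hF.comp_continuous (f := fun y => (s, y)) (by fun_prop) fun _ => ⟨hs, mem_univ _⟩

lemma continuousOn_intervalIntegral {X : Type*} [TopologicalSpace X] [FirstCountableTopology X]
    {F : X → ℝ → E} {S : Set X} (hF : ContinuousOn (uncurry F) (S ×ˢ univ)) (a b : ℝ) :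
    ContinuousOn (fun s => ∫ x in a..b, F s x) S := by
  rw [continuousOn_iff_continuous_domRestrict]
  refine continuous_parametric_intervalIntegral_of_continuous' (f := fun s : S => F s) ?_ a b
  exact hF.comp_continuous (f := fun p : S × ℝ => (↑p.1, p.2)) (by fun_prop)
    fun p => ⟨p.1.2, mem_univ _⟩

lemma hasDerivAt_intervalIntegral {F F' : ℝ → ℝ → E} {S : Set ℝ} {a b t : ℝ} (hS : S ∈ 𝓝 t)
    (hF : ∀ s ∈ S, ContinuousOn (F s) (uIcc a b))
    (hderiv : ∀ s ∈ S, ∀ x ∈ uIcc a b, HasDerivAt (F · x) (F' s x) s)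
    (hF' : ContinuousOn (uncurry F') (S ×ˢ uIcc a b)) :
    HasDerivAt (fun s => ∫ x in a..b, F s x) (∫ x in a..b, F' t x) t := by
  obtain ⟨ε, hε, hball⟩ := Metric.nhds_basis_closedBall.mem_iff.1 hS
  obtain ⟨C, hC⟩ := ((isCompact_closedBall t ε).prod isCompact_uIcc).exists_bound_of_continuousOn
    (hF'.mono (prod_mono hball subset_rfl))
  have hF't : ContinuousOn (F' t) (uIcc a b) :=
    hF'.comp (f := fun x => (t, x)) (by fun_prop) fun x hx => ⟨mem_of_mem_nhds hS, hx⟩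
  refine (hasDerivAt_integral_of_dominated_loc_of_deriv_le (bound := fun _ => C)
    (Metric.closedBall_mem_nhds t hε) ?_ (hF t (mem_of_mem_nhds hS)).intervalIntegrable
    hF't.intervalIntegrable.aestronglyMeasurable_restrict_uIoc ?_
    _root_.intervalIntegrable_const ?_).2
  · filter_upwards [hS] with s hs
    exact (hF s hs).intervalIntegrable.aestronglyMeasurable_restrict_uIoc
  · exact ae_of_all _ fun x hx s hs => hC (s, x) ⟨hs, uIoc_subset_uIcc hx⟩
  · exact ae_of_all _ fun x hx s hs => hderiv s (hball hs) x (uIoc_subset_uIcc hx)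

/- Peano's form of the symmetry of mixed partials: only one of them is assumed to exist, so
Mathlib's `second_derivative_symmetric`, which needs a second Fréchet derivative, does not apply. -/
lemma hasDerivAt_partialDeriv_swap [CompleteSpace E] {F Fₜ Fₓ Fₜₓ : ℝ → ℝ → E} {S : Set ℝ} {t : ℝ}
    (hS : S ∈ 𝓝 t)
    (hFₜ : ∀ s ∈ S, ∀ x, HasDerivAt (F · x) (Fₜ s x) s)
    (hFₓ : ∀ s ∈ S, ∀ x, HasDerivAt (F s) (Fₓ s x) x)
    (hFₜₓ : ∀ s ∈ S, ∀ x, HasDerivAt (Fₜ s) (Fₜₓ s x) x)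
    (hFₜ_cont : ContinuousOn (uncurry Fₜ) (S ×ˢ univ))
    (hFₜₓ_cont : ContinuousOn (uncurry Fₜₓ) (S ×ˢ univ)) (x : ℝ) :
    HasDerivAt (Fₓ · x) (Fₜₓ t x) t := by
  obtain ⟨ε, hε, hball⟩ := Metric.mem_nhds_iff.1 hS
  have mem_of_uIcc {s : ℝ} (hs : s ∈ Metric.ball t ε) : ∀ τ ∈ uIcc t s, τ ∈ S := fun τ hτ =>
    hball ((convex_ball t ε).ordConnected.uIcc_subset (Metric.mem_ball_self hε) hs hτ)
  have slice {G : ℝ → ℝ → E} (hG : ContinuousOn (uncurry G) (S ×ˢ univ)) (y : ℝ) :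
      ContinuousOn (G · y) S :=
    hG.comp (f := fun τ => (τ, y)) (by fun_prop) fun τ hτ => ⟨hτ, mem_univ _⟩
  have F_eq {s : ℝ} (hs : s ∈ Metric.ball t ε) :
      F s = fun y => F t y + ∫ τ in t..s, Fₜ τ y := by
    funext y
    rw [integral_eq_sub_of_hasDerivAt (fun τ hτ => hFₜ τ (mem_of_uIcc hs τ hτ) y)
      ((slice hFₜ_cont y).mono (mem_of_uIcc hs)).intervalIntegrable, add_sub_cancel]
  have Fₓ_eq {s : ℝ} (hs : s ∈ Metric.ball t ε) :
      Fₓ s x = Fₓ t x + ∫ τ in t..s, Fₜₓ τ x := by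
    have integral_deriv : HasDerivAt (fun y => ∫ τ in t..s, Fₜ τ y) (∫ τ in t..s, Fₜₓ τ x) x :=
      hasDerivAt_intervalIntegral univ_mem
        (fun y _ => (slice hFₜ_cont y).mono (mem_of_uIcc hs))
        (fun y _ τ hτ => hFₜₓ τ (mem_of_uIcc hs τ hτ) y)
        (hFₜₓ_cont.comp (f := Prod.swap) (by fun_prop)
          fun p hp => ⟨mem_of_uIcc hs _ hp.2, mem_univ _⟩)
    have F_deriv := (hFₓ t (mem_of_mem_nhds hS) x).fun_add integral_deriv
    rw [← F_eq hs] at F_deriv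
    exact (hFₓ s (hball hs) x).unique F_deriv
  have ball_nhds := Metric.ball_mem_nhds t hε
  have Fₜₓ_cont := (slice hFₜₓ_cont x).mono hball
  have primitive_deriv : HasDerivAt (fun s => ∫ τ in t..s, Fₜₓ τ x) (Fₜₓ t x) t :=
    integral_hasDerivAt_right (by simp)
      (Fₜₓ_cont.stronglyMeasurableAtFilter Metric.isOpen_ball t (Metric.mem_ball_self hε))
      (Fₜₓ_cont.continuousAt ball_nhds)
  refine (primitive_deriv.const_add (Fₓ t x)).congr_of_eventuallyEq ?_
  filter_upwards [ball_nhds] with s hs using Fₓ_eq hs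

lemma integral_eq_zero_of_hasDerivAt_of_periodic [CompleteSpace E] {f f' : ℝ → E} {T : ℝ}
    (hf : Periodic f T) (hderiv : ∀ x, HasDerivAt f (f' x) x)
    (hint : IntervalIntegrable f' volume 0 T) : ∫ x in 0..T, f' x = 0 := by
  rw [integral_eq_sub_of_hasDerivAt (fun x _ => hderiv x) hint, hf.eq, sub_self]

lemma periodic_deriv {f : ℝ → E} {T : ℝ} (hf : Periodic f T) : Periodic (deriv f) T := fun x => by
  rw [← deriv_comp_add_const, hf.funext]

end Calculus

section IntegralInequalities

variable {f f' : ℝ → ℝ} {a b : ℝ}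

lemma sq_integral_le_mul_integral_sq (hab : a ≤ b) (hf : IntervalIntegrable f volume a b)
    (hf_sq : IntervalIntegrable (fun x => f x ^ 2) volume a b) :
    (∫ x in a..b, f x) ^ 2 ≤ (b - a) * ∫ x in a..b, f x ^ 2 := by
  rcases hab.eq_or_lt with rfl | hlt
  · simp
  have jensen : (⨍ x in a..b, f x) ^ 2 ≤ ⨍ x in a..b, f x ^ 2 := by
    rw [uIoc_of_le hab]
    exact even_two.convexOn_pow.map_set_average_le (by fun_prop) isClosed_univ (by simpa) (by simp)
      (by simp) hf.1 hf_sq.1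
  rw [interval_average_eq_div, interval_average_eq_div, div_pow,
    div_le_div_iff₀ (by nlinarith) (by linarith)] at jensen
  nlinarith

lemma abs_sub_le_integral_abs_deriv {x y : ℝ} (hx : x ∈ Icc a b) (hy : y ∈ Icc a b)
    (hderiv : ∀ z ∈ Icc a b, HasDerivAt f (f' z) z) (hf' : IntervalIntegrable f' volume a b) :
    |f y - f x| ≤ ∫ z in a..b, |f' z| := by
  have hab : a ≤ b := hx.1.trans hx.2
  have hsub : uIcc x y ⊆ Icc a b := ordConnected_Icc.uIcc_subset hx hy
  rw [← integral_eq_sub_of_hasDerivAt (fun z hz => hderiv z (hsub hz))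
    (hf'.mono_set (by rwa [uIcc_of_le hab]))]
  refine (norm_integral_le_integral_norm_uIoc (f := f')).trans ?_
  rw [integral_of_le hab]
  refine setIntegral_mono_set hf'.norm.1 (ae_of_all _ fun _ => abs_nonneg _) ?_
  exact (Ioc_subset_Ioc (le_min hx.1 hy.1) (max_le hx.2 hy.2)).eventuallyLE

lemma integral_sq_le_of_mem_Icc_of_integral_eq_zero {m M : ℝ} (hab : a ≤ b)
    (hf : ContinuousOn f (Icc a b)) (hmean : ∫ x in a..b, f x = 0)
    (hmem : ∀ x ∈ Icc a b, f x ∈ Icc m M) :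
    ∫ x in a..b, f x ^ 2 ≤ (b - a) * (-(m * M)) := by
  rw [← uIcc_of_le hab] at hf
  calc ∫ x in a..b, f x ^ 2
      ≤ ∫ x in a..b, ((m + M) * f x - m * M) := by
        refine integral_mono_on hab (hf.pow 2).intervalIntegrable
          ((hf.const_mul _).sub continuousOn_const).intervalIntegrable fun x hx => ?_
        nlinarith [mul_nonneg (sub_nonneg.2 (hmem x hx).1) (sub_nonneg.2 (hmem x hx).2)]
    _ = (b - a) * (-(m * M)) := by
        rw [integral_sub (hf.const_mul _).intervalIntegrable intervalIntegrable_const,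
          intervalIntegral.integral_const_mul, hmean, intervalIntegral.integral_const, smul_eq_mul]
        ring

lemma four_mul_integral_sq_le_integral_deriv_sq (hab : a ≤ b)
    (hderiv : ∀ x ∈ Icc a b, HasDerivAt f (f' x) x) (hf' : IntervalIntegrable f' volume a b)
    (hf'_sq : IntervalIntegrable (fun x => f' x ^ 2) volume a b)
    (hmean : ∫ x in a..b, f x = 0) :
    4 * ∫ x in a..b, f x ^ 2 ≤ (b - a) ^ 2 * ∫ x in a..b, f' x ^ 2 := by
  have hf : ContinuousOn f (Icc a b) := fun x hx => (hderiv x hx).continuousAt.continuousWithinAt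
  obtain ⟨x, hx, hmin⟩ := isCompact_Icc.exists_isMinOn (nonempty_Icc.2 hab) hf
  obtain ⟨y, hy, hmax⟩ := isCompact_Icc.exists_isMaxOn (nonempty_Icc.2 hab) hf
  have osc_sq_le : (f y - f x) ^ 2 ≤ (b - a) * ∫ z in a..b, f' z ^ 2 := calc
    (f y - f x) ^ 2 ≤ (∫ z in a..b, |f' z|) ^ 2 :=
      sq_le_sq' (neg_le_of_abs_le (abs_sub_le_integral_abs_deriv hx hy hderiv hf'))
        (le_of_abs_le (abs_sub_le_integral_abs_deriv hx hy hderiv hf'))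
    _ ≤ (b - a) * ∫ z in a..b, |f' z| ^ 2 :=
      sq_integral_le_mul_integral_sq hab hf'.abs (by simpa only [sq_abs] using hf'_sq)
    _ = (b - a) * ∫ z in a..b, f' z ^ 2 := by simp only [sq_abs]
  calc 4 * ∫ z in a..b, f z ^ 2
      ≤ 4 * ((b - a) * (-(f x * f y))) := by
        gcongr
        exact integral_sq_le_of_mem_Icc_of_integral_eq_zero hab hf hmean
          fun z hz => ⟨hmin hz, hmax hz⟩
    _ ≤ (b - a) * (f y - f x) ^ 2 := by
        nlinarith [mul_nonneg (sub_nonneg.2 hab) (sq_nonneg (f x + f y))]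
    _ ≤ (b - a) * ((b - a) * ∫ z in a..b, f' z ^ 2) :=
        mul_le_mul_of_nonneg_left osc_sq_le (sub_nonneg.2 hab)
    _ = (b - a) ^ 2 * ∫ z in a..b, f' z ^ 2 := by ring

lemma sixteen_mul_sq_integral_sq_le_integral_deriv_pow_four (hab : a ≤ b)
    (hderiv : ∀ x ∈ Icc a b, HasDerivAt f (f' x) x) (hf' : IntervalIntegrable f' volume a b)
    (hf'_sq : IntervalIntegrable (fun x => f' x ^ 2) volume a b)
    (hf'_pow : IntervalIntegrable (fun x => f' x ^ 4) volume a b)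
    (hmean : ∫ x in a..b, f x = 0) :
    16 * (∫ x in a..b, f x ^ 2) ^ 2 ≤ (b - a) ^ 5 * ∫ x in a..b, f' x ^ 4 := by
  have pow_four (x : ℝ) : f' x ^ 4 = (f' x ^ 2) ^ 2 := by ring
  simp only [pow_four] at hf'_pow ⊢
  calc 16 * (∫ x in a..b, f x ^ 2) ^ 2
      = (4 * ∫ x in a..b, f x ^ 2) ^ 2 := by ring
    _ ≤ ((b - a) ^ 2 * ∫ x in a..b, f' x ^ 2) ^ 2 := by
        have := integral_nonneg (μ := volume) hab fun x _ => sq_nonneg (f x)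
        exact pow_le_pow_left₀ (by positivity)
          (four_mul_integral_sq_le_integral_deriv_sq hab hderiv hf' hf'_sq hmean) 2
    _ = (b - a) ^ 4 * (∫ x in a..b, f' x ^ 2) ^ 2 := by ring
    _ ≤ (b - a) ^ 4 * ((b - a) * ∫ x in a..b, (f' x ^ 2) ^ 2) := by
        gcongr
        exact sq_integral_le_mul_integral_sq hab hf'_sq hf'_pow
    _ = (b - a) ^ 5 * ∫ x in a..b, (f' x ^ 2) ^ 2 := by ring

end IntegralInequalities

/-- The time derivative `u_t`. Its space derivative `u_tx` is `deriv (timeDeriv u t)`, in the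
order of differentiation used by `IsPeriodicOHSolution`. -/
noncomputable def timeDeriv (u : ℝ → ℝ → ℝ) (t x : ℝ) : ℝ :=
  deriv (fun s => u s x) t

/-- The derivative `u_t + u u_x` of `u` along its characteristics; the Ostrovsky–Hunter equation
says that its space derivative is `γ u`. -/
noncomputable def materialDeriv (u : ℝ → ℝ → ℝ) (t x : ℝ) : ℝ :=
  timeDeriv u t x + u t x * deriv (u t) x

/-- The squared norm `‖u(t, ·)‖²_{L²}` over one period, which solutions conserve. -/
noncomputable def energy (u : ℝ → ℝ → ℝ) (t : ℝ) : ℝ :=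
  ∫ x in (0 : ℝ)..1, u t x ^ 2

/-- The functional `∫₀¹ u_x³ dx`, whose decrease along solutions drives the wave breaking. -/
noncomputable def cubicSlope (u : ℝ → ℝ → ℝ) (t : ℝ) : ℝ :=
  ∫ x in (0 : ℝ)..1, deriv (u t) x ^ 3

namespace IsPeriodicOHSolution

variable {γ : ℝ} {S : Set ℝ} {u : ℝ → ℝ → ℝ} {t : ℝ}

section Regularity

lemma hasDerivAt_time (h : IsPeriodicOHSolution γ S u) (ht : t ∈ S) (x : ℝ) :
    HasDerivAt (u · x) (timeDeriv u t x) t :=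
  (h.diff_t t ht x).hasDerivAt

lemma hasDerivAt_space (h : IsPeriodicOHSolution γ S u) (ht : t ∈ S) (x : ℝ) :
    HasDerivAt (u t) (deriv (u t) x) x :=
  (h.diff_x t ht x).hasDerivAt

lemma hasDerivAt_space_deriv (h : IsPeriodicOHSolution γ S u) (ht : t ∈ S) (x : ℝ) :
    HasDerivAt (deriv (u t)) (deriv (deriv (u t)) x) x :=
  (h.diff_xx t ht x).hasDerivAt

lemma hasDerivAt_space_timeDeriv (h : IsPeriodicOHSolution γ S u) (ht : t ∈ S) (x : ℝ) :
    HasDerivAt (timeDeriv u t) (deriv (timeDeriv u t) x) x :=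
  (h.diff_tx t ht x).hasDerivAt

lemma hasDerivAt_time_deriv (h : IsPeriodicOHSolution γ S u) (hS : S ∈ 𝓝 t) (x : ℝ) :
    HasDerivAt (fun s => deriv (u s) x) (deriv (timeDeriv u t) x) t :=
  hasDerivAt_partialDeriv_swap hS (fun _ hs => h.hasDerivAt_time hs)
    (fun _ hs => h.hasDerivAt_space hs) (fun _ hs => h.hasDerivAt_space_timeDeriv hs)
    h.cont_ut h.cont_utx x

lemma continuous (h : IsPeriodicOHSolution γ S u) (ht : t ∈ S) : Continuous (u t) :=
  continuous_of_continuousOn_uncurry h.cont_u ht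

lemma continuous_timeDeriv (h : IsPeriodicOHSolution γ S u) (ht : t ∈ S) :
    Continuous (timeDeriv u t) :=
  continuous_of_continuousOn_uncurry h.cont_ut ht

lemma continuous_deriv (h : IsPeriodicOHSolution γ S u) (ht : t ∈ S) : Continuous (deriv (u t)) :=
  continuous_of_continuousOn_uncurry (F := fun s => deriv (u s)) h.cont_ux ht

lemma continuous_deriv_deriv (h : IsPeriodicOHSolution γ S u) (ht : t ∈ S) :
    Continuous (deriv (deriv (u t))) :=
  continuous_of_continuousOn_uncurry (F := fun s => deriv (deriv (u s))) h.cont_uxx ht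

lemma continuousOn_energy (h : IsPeriodicOHSolution γ S u) : ContinuousOn (energy u) S :=
  continuousOn_intervalIntegral (h.cont_u.pow 2) 0 1

lemma continuousOn_cubicSlope (h : IsPeriodicOHSolution γ S u) : ContinuousOn (cubicSlope u) S :=
  continuousOn_intervalIntegral (h.cont_ux.pow 3) 0 1

end Regularity

section ConservationLaws

lemma hasDerivAt_materialDeriv (h : IsPeriodicOHSolution γ S u) (htS : t ∈ S) (ht : 0 < t)
    (x : ℝ) : HasDerivAt (materialDeriv u t) (γ * u t x) x := by
  refine ((h.hasDerivAt_space_timeDeriv htS x).fun_add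
    ((h.hasDerivAt_space htS x).fun_mul (h.hasDerivAt_space_deriv htS x))).congr_deriv ?_
  rw [← h.eqn t htS ht x, sq, add_assoc]
  rfl

lemma periodic_materialDeriv (h : IsPeriodicOHSolution γ S u) (hS : S ∈ 𝓝 t) :
    Periodic (materialDeriv u t) 1 := by
  have htS : t ∈ S := mem_of_mem_nhds hS
  have timeDeriv_periodic : Periodic (timeDeriv u t) 1 := fun x =>
    EventuallyEq.deriv_eq (by filter_upwards [hS] with s hs using h.periodic s hs x)
  have space_periodic : Periodic (u t) 1 := h.periodic t htS
  exact timeDeriv_periodic.add (space_periodic.mul (periodic_deriv space_periodic))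

lemma integral_eq_zero (h : IsPeriodicOHSolution γ S u) (hγ : γ ≠ 0) (hS : S ∈ 𝓝 t)
    (ht : 0 < t) : ∫ x in (0 : ℝ)..1, u t x = 0 := by
  have htS : t ∈ S := mem_of_mem_nhds hS
  have integral_mul_eq_zero : ∫ x in (0 : ℝ)..1, γ * u t x = 0 :=
    integral_eq_zero_of_hasDerivAt_of_periodic (h.periodic_materialDeriv hS)
      (h.hasDerivAt_materialDeriv htS ht) (((h.continuous htS).const_mul γ).intervalIntegrable 0 1)
  rw [intervalIntegral.integral_const_mul] at integral_mul_eq_zero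
  exact (mul_eq_zero.1 integral_mul_eq_zero).resolve_left hγ

lemma integral_mul_timeDeriv_eq_zero (h : IsPeriodicOHSolution γ S u) (hγ : γ ≠ 0)
    (hS : S ∈ 𝓝 t) (ht : 0 < t) : ∫ x in (0 : ℝ)..1, 2 * u t x * timeDeriv u t x = 0 := by
  have htS : t ∈ S := mem_of_mem_nhds hS
  have u_cont := h.continuous htS
  have ut_cont := h.continuous_timeDeriv htS
  -- With `D = u_t + u u_x` and `D_x = γ u`: `2 u u_t = 2 u D - 2 u² u_x = (D² / γ - 2 u³ / 3)_x`.
  refine integral_eq_zero_of_hasDerivAt_of_periodic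
    (f := fun x => materialDeriv u t x ^ 2 / γ - 2 * u t x ^ 3 / 3) (fun x => ?_) (fun x => ?_)
    (((u_cont.const_mul 2).mul ut_cont).intervalIntegrable 0 1)
  · simp only [h.periodic_materialDeriv hS x, h.periodic t htS x]
  · refine ((((h.hasDerivAt_materialDeriv htS ht x).fun_pow 2).div_const γ).fun_sub
      ((((h.hasDerivAt_space htS x).fun_pow 3).const_mul 2).div_const 3)).congr_deriv ?_
    simp only [materialDeriv]
    field_simp
    push_cast
    ring

lemma hasDerivAt_energy (h : IsPeriodicOHSolution γ S u) (hγ : γ ≠ 0) (hS : S ∈ 𝓝 t)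
    (ht : 0 < t) : HasDerivAt (energy u) 0 t := by
  rw [← h.integral_mul_timeDeriv_eq_zero hγ hS ht]
  have hsub : S ×ˢ uIcc (0 : ℝ) 1 ⊆ S ×ˢ univ := prod_mono subset_rfl (subset_univ _)
  refine hasDerivAt_intervalIntegral (F' := fun s x => 2 * u s x * timeDeriv u s x) hS
    (fun s hs => ((h.continuous hs).pow 2).continuousOn) (fun s hs x _ => ?_)
    (((h.cont_u.const_mul 2).mul h.cont_ut).mono hsub)
  exact ((h.hasDerivAt_time hs x).fun_pow 2).congr_deriv (by norm_num)

lemma energy_eq_energy_zero {T : ℝ} (h : IsPeriodicOHSolution γ S u) (hγ : γ ≠ 0)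
    (hS : Ico 0 T ⊆ S) (ht : t ∈ Ico 0 T) : energy u t = energy u 0 := by
  have hsub : Icc 0 t ⊆ S := fun s hs => hS ⟨hs.1, hs.2.trans_lt ht.2⟩
  have deriv_zero (s : ℝ) (hs : s ∈ Ioo 0 t) : HasDerivAt (energy u) 0 s :=
    h.hasDerivAt_energy hγ (mem_of_superset (Icc_mem_nhds hs.1 hs.2) hsub) hs.1
  rcases ht.1.eq_or_lt with rfl | hpos
  · rfl
  obtain ⟨_, _, slope⟩ := exists_hasDerivAt_eq_slope (energy u) (fun _ => 0) hpos
    (h.continuousOn_energy.mono hsub) deriv_zero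
  exact sub_eq_zero.1 ((div_eq_zero_iff.1 slope.symm).resolve_right (by linarith))

end ConservationLaws

section CubicSlope

lemma integral_deriv_pow_four_add_eq_zero (h : IsPeriodicOHSolution γ S u) (ht : t ∈ S) :
    ∫ x in (0 : ℝ)..1,
      (deriv (u t) x ^ 4 + 3 * u t x * deriv (u t) x ^ 2 * deriv (deriv (u t)) x) = 0 := by
  have u_cont := h.continuous ht
  have ux_cont := h.continuous_deriv ht
  have uxx_cont := h.continuous_deriv_deriv ht
  refine integral_eq_zero_of_hasDerivAt_of_periodic (f := fun x => u t x * deriv (u t) x ^ 3)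
    (fun x => ?_) (fun x => ?_) (Continuous.intervalIntegrable (by fun_prop) 0 1)
  · simp only [h.periodic t ht x, periodic_deriv (h.periodic t ht) x]
  · refine ((h.hasDerivAt_space ht x).fun_mul
      ((h.hasDerivAt_space_deriv ht x).fun_pow 3)).congr_deriv ?_
    push_cast
    ring

lemma hasDerivAt_cubicSlope (h : IsPeriodicOHSolution γ S u) (hS : S ∈ 𝓝 t) (ht : 0 < t) :
    HasDerivAt (cubicSlope u)
      (∫ x in (0 : ℝ)..1, (3 * γ * u t x * deriv (u t) x ^ 2 - 2 * deriv (u t) x ^ 4)) t := by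
  have htS : t ∈ S := mem_of_mem_nhds hS
  have u_cont := h.continuous htS
  have ux_cont := h.continuous_deriv htS
  have uxx_cont := h.continuous_deriv_deriv htS
  have deriv_eq : HasDerivAt (cubicSlope u)
      (∫ x in (0 : ℝ)..1, 3 * deriv (u t) x ^ 2 * deriv (timeDeriv u t) x) t := by
    refine hasDerivAt_intervalIntegral
      (F' := fun s x => 3 * deriv (u s) x ^ 2 * deriv (timeDeriv u s) x) (S := interior S)
      (interior_mem_nhds.2 hS)
      (fun s hs => ((h.continuous_deriv (interior_subset hs)).pow 3).continuousOn)
      (fun s hs x _ => ?_) ((((h.cont_ux.pow 2).const_mul 3).mul h.cont_utx).mono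
        (prod_mono interior_subset (subset_univ _)))
    exact ((h.hasDerivAt_time_deriv (mem_interior_iff_mem_nhds.1 hs) x).fun_pow 3).congr_deriv
      (by norm_num)
  refine deriv_eq.congr_deriv ?_
  calc ∫ x in (0 : ℝ)..1, 3 * deriv (u t) x ^ 2 * deriv (timeDeriv u t) x
      = ∫ x in (0 : ℝ)..1, ((3 * γ * u t x * deriv (u t) x ^ 2 - 2 * deriv (u t) x ^ 4)
          - (deriv (u t) x ^ 4 + 3 * u t x * deriv (u t) x ^ 2 * deriv (deriv (u t)) x)) := by
        congr 1 with x
        have eqn : deriv (timeDeriv u t) x + deriv (u t) x ^ 2 + u t x * deriv (deriv (u t)) x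
            = γ * u t x := h.eqn t htS ht x
        linear_combination 3 * deriv (u t) x ^ 2 * eqn
    _ = ∫ x in (0 : ℝ)..1, (3 * γ * u t x * deriv (u t) x ^ 2 - 2 * deriv (u t) x ^ 4) := by
        rw [intervalIntegral.integral_sub (Continuous.intervalIntegrable (by fun_prop) 0 1)
          (Continuous.intervalIntegrable (by fun_prop) 0 1),
          h.integral_deriv_pow_four_add_eq_zero htS, sub_zero]

lemma deriv_cubicSlope_le (h : IsPeriodicOHSolution γ S u) (hγ : γ ≠ 0) (hS : S ∈ 𝓝 t)
    (ht : 0 < t) :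
    deriv (cubicSlope u) t ≤ 9 / 4 * γ ^ 2 * energy u t - 16 * energy u t ^ 2 := by
  have htS : t ∈ S := mem_of_mem_nhds hS
  have u_cont := h.continuous htS
  have ux_cont := h.continuous_deriv htS
  have quartic_bound : 16 * energy u t ^ 2 ≤ ∫ x in (0 : ℝ)..1, deriv (u t) x ^ 4 := by
    simpa only [energy, sub_zero, one_pow, one_mul] using
      sixteen_mul_sq_integral_sq_le_integral_deriv_pow_four zero_le_one
        (fun x _ => h.hasDerivAt_space htS x) (ux_cont.intervalIntegrable 0 1)
        ((ux_cont.pow 2).intervalIntegrable 0 1) ((ux_cont.pow 4).intervalIntegrable 0 1)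
        (h.integral_eq_zero hγ hS ht)
  calc deriv (cubicSlope u) t
      = ∫ x in (0 : ℝ)..1, (3 * γ * u t x * deriv (u t) x ^ 2 - 2 * deriv (u t) x ^ 4) :=
        (h.hasDerivAt_cubicSlope hS ht).deriv
    _ ≤ ∫ x in (0 : ℝ)..1, (9 / 4 * γ ^ 2 * u t x ^ 2 - deriv (u t) x ^ 4) := by
        refine integral_mono_on zero_le_one (Continuous.intervalIntegrable (by fun_prop) 0 1)
          (Continuous.intervalIntegrable (by fun_prop) 0 1) fun x _ => ?_
        linarith [sq_nonneg (3 / 2 * γ * u t x - deriv (u t) x ^ 2)]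
    _ = 9 / 4 * γ ^ 2 * energy u t - ∫ x in (0 : ℝ)..1, deriv (u t) x ^ 4 := by
        rw [intervalIntegral.integral_sub (Continuous.intervalIntegrable (by fun_prop) 0 1)
          (Continuous.intervalIntegrable (by fun_prop) 0 1), intervalIntegral.integral_const_mul,
          energy]
    _ ≤ 9 / 4 * γ ^ 2 * energy u t - 16 * energy u t ^ 2 := sub_le_sub_left quartic_bound _

lemma pow_three_le_cubicSlope {c : ℝ} (h : IsPeriodicOHSolution γ S u) (ht : t ∈ S)
    (hc : ∀ x, c ≤ deriv (u t) x) : c ^ 3 ≤ cubicSlope u t := by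
  have const_le : ∫ _ in (0 : ℝ)..1, c ^ 3 ≤ cubicSlope u t :=
    integral_mono_on zero_le_one intervalIntegrable_const
      (((h.continuous_deriv ht).pow 3).intervalIntegrable 0 1)
      fun x _ => (Odd.pow_le_pow (by decide : Odd 3)).2 (hc x)
  simpa using const_le

lemma cubicSlope_le {T : ℝ} (h : IsPeriodicOHSolution γ S u) (hγ : γ ≠ 0) (hS : Ico 0 T ⊆ S)
    (ht : t ∈ Ico 0 T) :
    cubicSlope u t ≤
      cubicSlope u 0 - (16 * energy u 0 ^ 2 - 9 / 4 * γ ^ 2 * energy u 0) * t := by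
  have nhds_of_mem {s : ℝ} (hs : s ∈ interior (Ico 0 T)) : S ∈ 𝓝 s :=
    mem_of_superset (mem_interior_iff_mem_nhds.1 hs) hS
  have pos_of_mem {s : ℝ} (hs : s ∈ interior (Ico 0 T)) : 0 < s := by
    rw [interior_Ico] at hs
    exact hs.1
  have decrease := (convex_Ico 0 T).image_sub_le_mul_sub_of_deriv_le
    (C := 9 / 4 * γ ^ 2 * energy u 0 - 16 * energy u 0 ^ 2) (h.continuousOn_cubicSlope.mono hS)
    (fun s hs => (h.hasDerivAt_cubicSlope (nhds_of_mem hs)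
      (pos_of_mem hs)).differentiableAt.differentiableWithinAt)
    (fun s hs => by
      rw [← h.energy_eq_energy_zero hγ hS (interior_subset hs)]
      exact h.deriv_cubicSlope_le hγ (nhds_of_mem hs) (pos_of_mem hs))
    0 ⟨le_rfl, ht.1.trans_lt ht.2⟩ t ht ht.1
  linarith

end CubicSlope

end IsPeriodicOHSolution

theorem wave_breaking_second_criterion_general {γ c T : ℝ} {S : Set ℝ} {u : ℝ → ℝ → ℝ}
    (hγ : γ ≠ 0) (hT : 0 < T) (hS : Ico 0 T ⊆ S) (h : IsPeriodicOHSolution γ S u)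
    (hE : 3 * |γ| / 8 < √(energy u 0)) (hc : ∀ t ∈ Ico 0 T, ∀ x, c ≤ deriv (u t) x) :
    T ≤ (cubicSlope u 0 - c ^ 3) / (16 * energy u 0 ^ 2 - 9 / 4 * γ ^ 2 * energy u 0) := by
  have energy_lower : (3 * |γ| / 8) ^ 2 < energy u 0 := (Real.lt_sqrt (by positivity)).1 hE
  rw [div_pow, mul_pow, sq_abs] at energy_lower
  have energy_pos : 0 < energy u 0 := lt_of_le_of_lt (by positivity) energy_lower
  have rate_pos : 0 < 16 * energy u 0 ^ 2 - 9 / 4 * γ ^ 2 * energy u 0 := by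
    linarith [mul_pos energy_pos (sub_pos.2 energy_lower)]
  refine le_of_forall_lt_imp_le_of_dense fun t ht => ?_
  rcases lt_or_ge t 0 with hneg | hnonneg
  · have := h.pow_three_le_cubicSlope (hS ⟨le_rfl, hT⟩) (hc 0 ⟨le_rfl, hT⟩)
    exact hneg.le.trans (div_nonneg (sub_nonneg.2 this) rate_pos.le)
  have upper := h.cubicSlope_le hγ hS ⟨hnonneg, ht⟩
  have lower := h.pow_three_le_cubicSlope (hS ⟨hnonneg, ht⟩) (hc t ⟨hnonneg, ht⟩)
  rw [le_div_iff₀ rate_pos]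
  linarith

/-- if `∫₀¹ (u₀')³ < 0` and `‖u₀‖_{L²} > 3γ/4`, then no periodic classical
solution with initial data `u₀` and `u_x` bounded from below exists globally in time,
i.e. every such solution on `[0,T)` has `T < ∞`. -/
theorem wave_breaking_second_criterion
    (γ : ℝ) (hγ : 0 < γ) (u₀ : ℝ → ℝ) (hreg : ContDiff ℝ 2 u₀)
    (hper : ∀ x : ℝ, u₀ (x + 1) = u₀ x)
    (hmean : (∫ x in (0:ℝ)..1, u₀ x) = 0)
    (hcond1 : (∫ x in (0:ℝ)..1, (deriv u₀ x) ^ 3) < 0)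
    (hcond2 : Real.sqrt (∫ x in (0:ℝ)..1, (u₀ x) ^ 2) > 3 * γ / 4) :
    ∀ u : ℝ → ℝ → ℝ,
      IsPeriodicOHSolution γ (Set.Ici 0) u →
      u 0 = u₀ →
      ¬ ∃ c : ℝ, ∀ t ∈ Set.Ici (0 : ℝ), ∀ x : ℝ, c ≤ deriv (u t) x := by
  rintro u h rfl ⟨c, hc⟩
  exact not_bddAbove_Ioi (0 : ℝ) ⟨_, fun T hT => wave_breaking_second_criterion_general hγ.ne' hT
    Ico_subset_Ici_self h ((by rw [abs_of_pos hγ]; linarith : _ < 3 * γ / 4).trans hcond2)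
    fun t ht => hc t ht.1⟩
end

section
/- Let γ > 0 and let u be a periodic classical solution of the Ostrovsky–Hunter equation on [0,T) with initial data u₀ satisfying ∫₀¹ u₀(x) dx = 0. Then for every t ∈ (0,T) one has the identity d/dt ∫₀¹ u_x(t,x)³ dx = −2 ∫₀¹ u_x(t,x)⁴ dx + 3γ ∫₀¹ u(t,x) u_x(t,x)² dx. -/
/-!
Near a positive time the mixed derivatives of `u` commute, so
`∂ₜ(u_xⁿ⁺¹) = (n + 1) u_xⁿ (γ u - u_x² - u u_xx)`. Integrating the last term by parts over a
period gives `-(n + 1) ∫ u u_xⁿ u_xx = ∫ u_xⁿ⁺²`, which cancels one of the `n + 1` copies of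
`-∫ u_xⁿ⁺²` and leaves
`d/dt ∫ u_xⁿ⁺¹ = -n ∫ u_xⁿ⁺² + (n + 1) γ ∫ u u_xⁿ`.
-/

open MeasureTheory Filter Set intervalIntegral

open scoped Topology

section MixedDerivatives

variable {𝕜 E : Type*} [RCLike 𝕜] [NormedAddCommGroup E] [NormedSpace 𝕜 E]
  {f f₁ f₁₂ : 𝕜 → 𝕜 → E}

theorem norm_second_difference_sub_le {U V : Set 𝕜} (hU : Convex ℝ U) (hV : Convex ℝ V)
    (h₁ : ∀ s ∈ U, ∀ y ∈ V, HasDerivAt (fun r => f r y) (f₁ s y) s)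
    (h₁₂ : ∀ s ∈ U, ∀ y ∈ V, HasDerivAt (f₁ s) (f₁₂ s y) y)
    {L : E} {ε : ℝ} (hL : ∀ s ∈ U, ∀ y ∈ V, ‖f₁₂ s y - L‖ ≤ ε)
    {a s b y : 𝕜} (ha : a ∈ U) (hs : s ∈ U) (hb : b ∈ V) (hy : y ∈ V) :
    ‖(f s y - f s b - (s * (y - b)) • L) - (f a y - f a b - (a * (y - b)) • L)‖
      ≤ ε * ‖y - b‖ * ‖s - a‖ := by
  have first_difference (r : 𝕜) (hr : r ∈ U) : ‖f₁ r y - f₁ r b - (y - b) • L‖ ≤ ε * ‖y - b‖ := by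
    have hderiv (z : 𝕜) (hz : z ∈ V) :
        HasDerivWithinAt (fun z => f₁ r z - z • L) (f₁₂ r z - L) V z := by
      simpa using ((h₁₂ r hr z hz).fun_sub ((hasDerivAt_id z).smul_const L)).hasDerivWithinAt
    have hmvt := hV.norm_image_sub_le_of_norm_hasDerivWithin_le hderiv (hL r hr) hb hy
    rwa [sub_sub_sub_comm, ← sub_smul] at hmvt
  refine hU.norm_image_sub_le_of_norm_hasDerivWithin_le
    (f := fun r => f r y - f r b - (r * (y - b)) • L) (fun r hr => ?_) first_difference ha hs
  have hlin : HasDerivAt (fun r : 𝕜 => (r * (y - b)) • L) ((y - b) • L) r := by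
    simpa using ((hasDerivAt_id r).mul_const (y - b)).smul_const L
  exact (((h₁ r hr y hy).sub (h₁ r hr b hb)).sub hlin).hasDerivWithinAt

theorem hasDerivAt_of_continuousAt_mixed_deriv {f₂ : 𝕜 → E} {a b : 𝕜}
    (h₁ : ∀ᶠ p in 𝓝 (a, b), HasDerivAt (fun r => f r p.2) (f₁ p.1 p.2) p.1)
    (h₁₂ : ∀ᶠ p in 𝓝 (a, b), HasDerivAt (f₁ p.1) (f₁₂ p.1 p.2) p.2)
    (h₂ : ∀ᶠ s in 𝓝 a, HasDerivAt (f s) (f₂ s) b)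
    (hcont : ContinuousAt (fun p : 𝕜 × 𝕜 => f₁₂ p.1 p.2) (a, b)) :
    HasDerivAt f₂ (f₁₂ a b) a := by
  refine .of_isLittleO <| Asymptotics.isLittleO_iff.2 fun ε hε => ?_
  have hclose : ∀ᶠ p in 𝓝 (a, b), ‖f₁₂ p.1 p.2 - f₁₂ a b‖ ≤ ε :=
    (Metric.tendsto_nhds.1 hcont ε hε).mono fun p hp => (dist_eq_norm _ _).symm.trans_le hp.le
  obtain ⟨δ, hδ, hprod⟩ := Metric.eventually_nhds_iff_ball.1 (h₁.and (h₁₂.and hclose))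
  have hball (s) (hs : s ∈ Metric.ball a δ) (y) (hy : y ∈ Metric.ball b δ) :=
    hprod (s, y) (ball_prod_same a b δ ▸ mk_mem_prod hs hy)
  filter_upwards [h₂, Metric.ball_mem_nhds a hδ] with s hs₂ hs
  have hderiv : HasDerivAt
      (fun y => (f s y - f s b - (s * (y - b)) • f₁₂ a b)
        - (f a y - f a b - (a * (y - b)) • f₁₂ a b))
      (f₂ s - f₂ a - (s - a) • f₁₂ a b) b := by
    have hlin (r : 𝕜) : HasDerivAt (fun y => (r * (y - b)) • f₁₂ a b) (r • f₁₂ a b) b := by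
      simpa using (((hasDerivAt_id b).sub_const b).const_mul r).smul_const (f₁₂ a b)
    refine (((hs₂.sub_const _).sub (hlin s)).sub
      ((h₂.self_of_nhds.sub_const _).sub (hlin a))).congr_deriv ?_
    module
  refine hderiv.le_of_lip' (by positivity) ?_
  filter_upwards [Metric.ball_mem_nhds b hδ] with y hy
  have hsecond := norm_second_difference_sub_le (convex_ball a δ) (convex_ball b δ)
    (fun r hr z hz => (hball r hr z hz).1) (fun r hr z hz => (hball r hr z hz).2.1)
    (fun r hr z hz => (hball r hr z hz).2.2)
    (Metric.mem_ball_self hδ) hs (Metric.mem_ball_self hδ) hy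
  simpa [mul_right_comm] using hsecond

end MixedDerivatives

theorem hasDerivAt_intervalIntegral_of_continuousOn {𝕜 E : Type*} [RCLike 𝕜]
    [NormedAddCommGroup E] [NormedSpace ℝ E] [NormedSpace 𝕜 E]
    {μ : Measure ℝ} [IsLocallyFiniteMeasure μ] {F F' : 𝕜 → ℝ → E} {x₀ : 𝕜} {a b : ℝ} {s : Set 𝕜}
    (hs : s ∈ 𝓝 x₀) (hF : ∀ x ∈ s, ContinuousOn (F x) (uIcc a b))
    (hF' : ContinuousOn (fun p : 𝕜 × ℝ => F' p.1 p.2) (s ×ˢ uIcc a b))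
    (hderiv : ∀ x ∈ s, ∀ y ∈ uIcc a b, HasDerivAt (fun z => F z y) (F' x y) x) :
    HasDerivAt (fun x => ∫ y in a..b, F x y ∂μ) (∫ y in a..b, F' x₀ y ∂μ) x₀ := by
  obtain ⟨K, hK, hKs, hKc⟩ := local_compact_nhds hs
  obtain ⟨C, hC⟩ := (hKc.prod isCompact_uIcc).exists_bound_of_continuousOn
    (hF'.mono (prod_mono_left hKs))
  have hF'x₀ : ContinuousOn (F' x₀) (uIcc a b) :=
    hF'.comp (f := fun y => (x₀, y)) (by fun_prop) fun y hy => ⟨mem_of_mem_nhds hs, hy⟩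
  have measurable_of_continuousOn {g : ℝ → E} (hg : ContinuousOn g (uIcc a b)) :
      AEStronglyMeasurable g (μ.restrict (uIoc a b)) :=
    hg.aestronglyMeasurable_of_subset_isCompact isCompact_uIcc measurableSet_uIoc uIoc_subset_uIcc
  exact (hasDerivAt_integral_of_dominated_loc_of_deriv_le (bound := fun _ => C) hK
    (eventually_of_mem hs fun x hx => measurable_of_continuousOn (hF x hx))
    (hF x₀ (mem_of_mem_nhds hs)).intervalIntegrable
    (measurable_of_continuousOn hF'x₀)
    (ae_of_all _ fun y hy x hx => hC (x, y) ⟨hx, uIoc_subset_uIcc hy⟩)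
    intervalIntegrable_const
    (ae_of_all _ fun y hy x hx => hderiv x (hKs hx) y (uIoc_subset_uIcc hy))).2

theorem periodic_deriv_s5 {𝕜 E : Type*} [NontriviallyNormedField 𝕜] [NormedAddCommGroup E]
    [NormedSpace 𝕜 E] {f : 𝕜 → E} {c : 𝕜}
    (hf : Function.Periodic f c) : Function.Periodic (deriv f) c := fun x => by
  rw [← deriv_comp_add_const f c x, funext hf]

section PeriodIntegrals

variable {v : ℝ → ℝ} {c : ℝ}

theorem integral_mul_deriv_pow_mul_deriv_deriv_of_periodic
    (hv : ContDiff ℝ 2 v) (hper : Function.Periodic v c) (a : ℝ) (n : ℕ) :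
    (n + 1) * ∫ x in a..a + c, v x * deriv v x ^ n * deriv (deriv v) x
      = -∫ x in a..a + c, deriv v x ^ (n + 2) := by
  have hv' : ContDiff ℝ 1 (deriv v) := hv.deriv'
  have hv'' : Continuous (deriv (deriv v)) := hv'.continuous_deriv_one
  have hderiv (x : ℝ) : HasDerivAt (fun y => deriv v y ^ (n + 1))
      ((n + 1) * deriv v x ^ n * deriv (deriv v) x) x := by
    simpa using (hv'.differentiable_one x).hasDerivAt.fun_pow (n + 1)
  calc (n + 1) * ∫ x in a..a + c, v x * deriv v x ^ n * deriv (deriv v) x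
    _ = ∫ x in a..a + c, v x * ((n + 1) * deriv v x ^ n * deriv (deriv v) x) := by
      rw [← intervalIntegral.integral_const_mul]
      congr! 2
      ring
    _ = v (a + c) * deriv v (a + c) ^ (n + 1) - v a * deriv v a ^ (n + 1)
        - ∫ x in a..a + c, deriv v x * deriv v x ^ (n + 1) :=
      integral_mul_deriv_eq_deriv_mul
        (fun x _ => (hv.differentiable two_ne_zero x).hasDerivAt) (fun x _ => hderiv x)
        (hv'.continuous.intervalIntegrable _ _)
        (((continuous_const.mul (hv'.continuous.pow n)).mul hv'').intervalIntegrable _ _)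
    _ = -∫ x in a..a + c, deriv v x ^ (n + 2) := by
      simp only [hper a, periodic_deriv_s5 hper a, sub_self, zero_sub, ← pow_succ']

theorem integral_deriv_pow_mul_sub_of_periodic
    (hv : ContDiff ℝ 2 v) (hper : Function.Periodic v c) (γ a : ℝ) (n : ℕ) :
    ∫ x in a..a + c, (n + 1) * deriv v x ^ n *
        (γ * v x - deriv v x ^ 2 - v x * deriv (deriv v) x)
      = -n * (∫ x in a..a + c, deriv v x ^ (n + 2))
        + (n + 1) * γ * ∫ x in a..a + c, v x * deriv v x ^ n := by
  have hv' : ContDiff ℝ 1 (deriv v) := hv.deriv'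
  have : Continuous (deriv (deriv v)) := hv'.continuous_deriv_one
  calc ∫ x in a..a + c, (n + 1) * deriv v x ^ n *
        (γ * v x - deriv v x ^ 2 - v x * deriv (deriv v) x)
    _ = ∫ x in a..a + c, ((n + 1) * γ * (v x * deriv v x ^ n)
          - (n + 1) * deriv v x ^ (n + 2)
          - (n + 1) * (v x * deriv v x ^ n * deriv (deriv v) x)) := by
      congr! 2
      ring
    _ = (n + 1) * γ * (∫ x in a..a + c, v x * deriv v x ^ n)
          - (n + 1) * (∫ x in a..a + c, deriv v x ^ (n + 2))
          - (n + 1) * ∫ x in a..a + c, v x * deriv v x ^ n * deriv (deriv v) x := by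
      rw [intervalIntegral.integral_sub, intervalIntegral.integral_sub]
      · simp only [intervalIntegral.integral_const_mul]
      all_goals exact Continuous.intervalIntegrable (by fun_prop) _ _
    _ = -n * (∫ x in a..a + c, deriv v x ^ (n + 2))
          + (n + 1) * γ * ∫ x in a..a + c, v x * deriv v x ^ n := by
      linear_combination -integral_mul_deriv_pow_mul_deriv_deriv_of_periodic hv hper a n

end PeriodIntegrals

namespace IsPeriodicOHSolution

variable {γ t : ℝ} {S : Set ℝ} {u : ℝ → ℝ → ℝ}

theorem contDiff (hsol : IsPeriodicOHSolution γ S u) (ht : t ∈ S) : ContDiff ℝ 2 (u t) := by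
  have huxx : Continuous (deriv (deriv (u t))) :=
    hsol.cont_uxx.comp_continuous (f := fun x => (t, x)) (by fun_prop) fun x => ⟨ht, mem_univ x⟩
  have hux : ContDiff ℝ 1 (deriv (u t)) := contDiff_one_iff_deriv.2 ⟨hsol.diff_xx t ht, huxx⟩
  exact contDiff_succ_iff_deriv.2 ⟨hsol.diff_x t ht, by simp, hux⟩

theorem hasDerivAt_deriv (hsol : IsPeriodicOHSolution γ S u) (hS : S ∈ 𝓝 t) (ht : 0 < t) (x : ℝ) :
    HasDerivAt (fun s => deriv (u s) x)
      (γ * u t x - deriv (u t) x ^ 2 - u t x * deriv (deriv (u t)) x) t := by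
  have hstrip : S ×ˢ univ ∈ 𝓝 (t, x) := prod_mem_nhds hS univ_mem
  have hmixed : HasDerivAt (fun s => deriv (u s) x)
      (deriv (fun y => deriv (fun s => u s y) t) x) t :=
    hasDerivAt_of_continuousAt_mixed_deriv (f := u)
      (f₁ := fun s y => deriv (fun r => u r y) s)
      (f₁₂ := fun s y => deriv (fun z => deriv (fun r => u r z) s) y)
      (eventually_of_mem hstrip fun p hp => (hsol.diff_t p.1 hp.1 p.2).hasDerivAt)
      (eventually_of_mem hstrip fun p hp => (hsol.diff_tx p.1 hp.1 p.2).hasDerivAt)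
      (eventually_of_mem hS fun s hs => (hsol.diff_x s hs x).hasDerivAt)
      (hsol.cont_utx.continuousAt hstrip)
  exact hmixed.congr_deriv (by linarith [hsol.eqn t (mem_of_mem_nhds hS) ht x])

theorem hasDerivAt_integral_deriv_pow (hsol : IsPeriodicOHSolution γ S u) (hS : S ∈ 𝓝 t)
    (ht : 0 < t) (a b : ℝ) (n : ℕ) :
    HasDerivAt (fun s => ∫ x in a..b, deriv (u s) x ^ (n + 1))
      (∫ x in a..b, (n + 1) * deriv (u t) x ^ n *
        (γ * u t x - deriv (u t) x ^ 2 - u t x * deriv (deriv (u t)) x)) t := by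
  have hnhds : interior S ∩ Ioi 0 ∈ 𝓝 t := inter_mem (interior_mem_nhds.2 hS) (Ioi_mem_nhds ht)
  have hstrip : (interior S ∩ Ioi 0) ×ˢ uIcc a b ⊆ S ×ˢ univ :=
    prod_mono (inter_subset_left.trans interior_subset) (subset_univ _)
  have hu := hsol.cont_u.mono hstrip
  have hux := hsol.cont_ux.mono hstrip
  have huxx := hsol.cont_uxx.mono hstrip
  refine hasDerivAt_intervalIntegral_of_continuousOn
    (F' := fun s x => (n + 1) * deriv (u s) x ^ n *
      (γ * u s x - deriv (u s) x ^ 2 - u s x * deriv (deriv (u s)) x)) hnhds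
    (fun s hs => ?_) (by fun_prop) (fun s hs x _ => ?_)
  · exact ((hsol.contDiff (interior_subset hs.1)).continuous_deriv one_le_two).continuousOn.pow _
  · simpa using (hsol.hasDerivAt_deriv (mem_interior_iff_mem_nhds.1 hs.1) hs.2 x).fun_pow (n + 1)

end IsPeriodicOHSolution

theorem cubic_derivative_identity_general {γ t : ℝ} {S : Set ℝ} {u : ℝ → ℝ → ℝ}
    (hsol : IsPeriodicOHSolution γ S u) (hS : S ∈ 𝓝 t) (ht : 0 < t) (n : ℕ) :
    HasDerivAt (fun s => ∫ x in (0:ℝ)..1, deriv (u s) x ^ (n + 1))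
      (-n * (∫ x in (0:ℝ)..1, deriv (u t) x ^ (n + 2))
        + (n + 1) * γ * ∫ x in (0:ℝ)..1, u t x * deriv (u t) x ^ n) t := by
  have ht' : t ∈ S := mem_of_mem_nhds hS
  refine (hsol.hasDerivAt_integral_deriv_pow hS ht 0 1 n).congr_deriv ?_
  simpa using integral_deriv_pow_mul_sub_of_periodic (hsol.contDiff ht') (hsol.periodic t ht') γ 0 n

/-- for every `t ∈ (0,T)`,
`d/dt ∫₀¹ u_x³ dx = -2 ∫₀¹ u_x⁴ dx + 3γ ∫₀¹ u u_x² dx`. -/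
theorem cubic_derivative_identity
    (γ T : ℝ) (hγ : 0 < γ) (u₀ : ℝ → ℝ) (u : ℝ → ℝ → ℝ)
    (hsol : IsPeriodicOHSolution γ (Set.Ico 0 T) u) (h0 : u 0 = u₀)
    (hmean : (∫ x in (0:ℝ)..1, u₀ x) = 0) :
    ∀ t ∈ Set.Ioo (0 : ℝ) T,
      HasDerivAt (fun s => ∫ x in (0:ℝ)..1, (deriv (u s) x) ^ 3)
        (-2 * (∫ x in (0:ℝ)..1, (deriv (u t) x) ^ 4)
          + 3 * γ * ∫ x in (0:ℝ)..1, u t x * (deriv (u t) x) ^ 2) t := by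
  intro t ht
  convert cubic_derivative_identity_general hsol (Ico_mem_nhds ht.1 ht.2) ht.1 2 using 1
  norm_num
end
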